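/- arXiv:math-ph/0509057 — 2 statements merged into one kernel-verified Lean document; each statement's English description precedes it below -/
import Mathlib

section
/- Let H be a nonzero complex Hilbert space and T a compact operator on H with ‖T‖ < 1. Then σ(Γ(T)) = {0} ∪ {1} ∪ ⋃_{n≥1} { Π_{j=1}^n λ_j : λ_j ∈ σ(T) }, with no closure needed, and Γ(T) itself is a compact operator on the Fock space Γ(H). -/
open scoped InnerProductSpace

/-- An abstract presentation of the `n`-fold Hilbert tensor power of `H`:
a Hilbert space `Hn` together with a map `emb` sending `(x 1, …, x n)` to the
elementary tensor `x 1 ⊗ ⋯ ⊗ x n`, such that inner products of elementary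
tensors multiply and the elementary tensors span a dense subspace. -/
structure TensorPowerStructure (H Hn : Type*) [NormedAddCommGroup H]
    [InnerProductSpace ℂ H] [NormedAddCommGroup Hn] [InnerProductSpace ℂ Hn]
    (n : ℕ) where
  emb : (Fin n → H) → Hn
  inner_emb : ∀ x y : Fin n → H, ⟪emb x, emb y⟫_ℂ = ∏ i, ⟪x i, y i⟫_ℂ
  dense_span : Dense ((Submodule.span ℂ (Set.range emb) : Submodule ℂ Hn) : Set Hn)

/-- `Tn` is the `n`-fold tensor power `T^{⊗n}` of `T`, acting as `T` on each
factor of elementary tensors. -/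
def IsTensorPowerOp {H Hn : Type*} [NormedAddCommGroup H] [InnerProductSpace ℂ H]
    [NormedAddCommGroup Hn] [InnerProductSpace ℂ Hn] {n : ℕ}
    (tp : TensorPowerStructure H Hn n) (T : H →L[ℂ] H) (Tn : Hn →L[ℂ] Hn) : Prop :=
  ∀ x : Fin n → H, Tn (tp.emb x) = tp.emb fun i => T (x i)

lemma exists_compl_op {H : Type*} [NormedAddCommGroup H] [InnerProductSpace ℂ H] [CompleteSpace H]
    (A : H →L[ℂ] H) : ∃ B : H →L[ℂ] H, ∀ x y : H,
      ⟪A x, A y⟫_ℂ + ⟪B x, B y⟫_ℂ = ((‖A‖ ^ 2 : ℝ) : ℂ) * ⟪x, y⟫_ℂ := by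
  have h : 0 ≤ algebraMap ℝ (H →L[ℂ] H) (‖A‖ ^ 2) - star A * A :=
    sub_nonneg.2 CStarAlgebra.star_mul_le_algebraMap_norm_sq
  obtain ⟨B, hB⟩ := CStarAlgebra.nonneg_iff_eq_star_mul_self.1 h
  refine ⟨B, fun x y => ?_⟩
  have h2 : star A * A + star B * B = algebraMap ℝ (H →L[ℂ] H) (‖A‖ ^ 2) := by
    rw [← hB]; abel
  have h3 := congrArg (fun S : H →L[ℂ] H => ⟪x, S y⟫_ℂ) h2
  simp only [add_apply, mul_apply_eq_comp, inner_add_right,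
    ContinuousLinearMap.star_eq_adjoint, ContinuousLinearMap.adjoint_inner_right] at h3
  rw [h3, Algebra.algebraMap_eq_smul_one]
  simp [inner_smul_right_eq_smul]

namespace TensorPowerStructure

variable {H K : Type*} [NormedAddCommGroup H] [InnerProductSpace ℂ H]
  [NormedAddCommGroup K] [InnerProductSpace ℂ K] {n : ℕ} (tp : TensorPowerStructure H K n)

lemma inner_update (i : Fin n) (x y : Fin n → H) (a b : H) :
    ⟪tp.emb (Function.update x i a), tp.emb (Function.update y i b)⟫_ℂ
      = ⟪a, b⟫_ℂ * ∏ j ∈ Finset.univ.erase i, ⟪x j, y j⟫_ℂ := by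
  rw [tp.inner_emb, ← Finset.mul_prod_erase _ _ (Finset.mem_univ i)]
  simp only [Function.update_self]
  congr 1
  refine Finset.prod_congr rfl fun j hj => ?_
  have := Finset.ne_of_mem_erase hj
  simp [this]

lemma inner_update_right (i : Fin n) (x y : Fin n → H) (b : H) :
    ⟪tp.emb x, tp.emb (Function.update y i b)⟫_ℂ
      = ⟪x i, b⟫_ℂ * ∏ j ∈ Finset.univ.erase i, ⟪x j, y j⟫_ℂ := by
  have := tp.inner_update i x y (x i) b
  rwa [Function.update_eq_self] at this

lemma norm_emb (x : Fin n → H) : ‖tp.emb x‖ = ∏ i, ‖x i‖ := by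
  have h := tp.inner_emb x x
  simp only [inner_self_eq_norm_sq_to_K] at h
  have h2 : ‖tp.emb x‖ ^ 2 = (∏ i, ‖x i‖) ^ 2 := by
    rw [← Finset.prod_pow]
    exact_mod_cast h
  exact (pow_left_inj₀ (norm_nonneg _) (Finset.prod_nonneg fun _ _ => norm_nonneg _) two_ne_zero).1 h2

lemma ext_emb {u v : K} (h : ∀ y, ⟪tp.emb y, u⟫_ℂ = ⟪tp.emb y, v⟫_ℂ) : u = v := by
  refine tp.dense_span.eq_of_inner_right (𝕜 := ℂ) fun w hw => ?_
  induction hw using Submodule.span_induction with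
  | mem w hw => obtain ⟨y, rfl⟩ := hw; exact h y
  | zero => simp
  | add a b _ _ ha hb => simp [inner_add_left, ha, hb]
  | smul c a _ ha => simp [inner_smul_left, ha]

lemma clm_ext {X : Type*} [NormedAddCommGroup X] [NormedSpace ℂ X] {A B : K →L[ℂ] X}
    (h : ∀ y, A (tp.emb y) = B (tp.emb y)) : A = B := by
  refine ContinuousLinearMap.ext_on tp.dense_span ?_
  rintro _ ⟨y, rfl⟩
  exact h y

/-- elementary tensors as a multilinear map -/
noncomputable def mlin : MultilinearMap ℂ (fun _ : Fin n => H) K :=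
  MultilinearMap.mk' tp.emb
    (by
      intro m i a b
      apply tp.ext_emb
      intro y
      simp only [inner_add_right, inner_update_right, add_mul])
    (by
      intro m i c a
      apply tp.ext_emb
      intro y
      simp only [inner_smul_right, inner_update_right, mul_assoc])

@[simp] lemma mlin_apply (x : Fin n → H) : tp.mlin x = tp.emb x := rfl

lemma denseRange_lc : DenseRange (Finsupp.linearCombination ℂ tp.emb) := by
  have h := tp.dense_span
  rw [← Finsupp.range_linearCombination] at h
  exact h

lemma lc_bound [CompleteSpace H] (i : Fin n) (A : H →L[ℂ] H) (c : (Fin n → H) →₀ ℂ) :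
    ‖Finsupp.linearCombination ℂ (fun x => tp.emb (Function.update x i (A (x i)))) c‖
      ≤ ‖A‖ * ‖Finsupp.linearCombination ℂ tp.emb c‖ := by
  obtain ⟨B, hB⟩ := exists_compl_op A
  have key : ∀ c d : (Fin n → H) →₀ ℂ,
      ⟪Finsupp.linearCombination ℂ (fun x => tp.emb (Function.update x i (A (x i)))) c,
        Finsupp.linearCombination ℂ (fun x => tp.emb (Function.update x i (A (x i)))) d⟫_ℂ
      + ⟪Finsupp.linearCombination ℂ (fun x => tp.emb (Function.update x i (B (x i)))) c,
        Finsupp.linearCombination ℂ (fun x => tp.emb (Function.update x i (B (x i)))) d⟫_ℂ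
      = ((‖A‖ ^ 2 : ℝ) : ℂ) * ⟪Finsupp.linearCombination ℂ tp.emb c,
          Finsupp.linearCombination ℂ tp.emb d⟫_ℂ := by
    intro c d
    simp only [Finsupp.linearCombination_apply, Finsupp.sum, sum_inner, inner_sum,
      inner_smul_left, inner_smul_right, Finset.mul_sum, ← Finset.sum_add_distrib]
    refine Finset.sum_congr rfl fun x _ => Finset.sum_congr rfl fun y _ => ?_
    rw [inner_update, inner_update, tp.inner_emb, ← Finset.mul_prod_erase _ _ (Finset.mem_univ i)]
    linear_combination (starRingEnd ℂ) (c y) * d x *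
      (∏ j ∈ Finset.univ.erase i, ⟪y j, x j⟫_ℂ) * hB (y i) (x i)
  have h := key c c
  simp only [inner_self_eq_norm_sq_to_K] at h
  set a := ‖Finsupp.linearCombination ℂ (fun x => tp.emb (Function.update x i (A (x i)))) c‖
  set b := ‖Finsupp.linearCombination ℂ (fun x => tp.emb (Function.update x i (B (x i)))) c‖
  set d := ‖Finsupp.linearCombination ℂ tp.emb c‖
  have h2 : a ^ 2 + b ^ 2 = ‖A‖ ^ 2 * d ^ 2 := by
    apply Complex.ofReal_injective
    push_cast
    push_cast at h
    exact h
  refine le_of_sq_le_sq ?_ (by positivity)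
  nlinarith [sq_nonneg b]

/-- `A` acting on the `i`-th factor -/
noncomputable def opAt [CompleteSpace H] [CompleteSpace K] (i : Fin n) (A : H →L[ℂ] H) :
    K →L[ℂ] K :=
  (Finsupp.linearCombination ℂ (fun x => tp.emb (Function.update x i (A (x i))))).extendOfNorm
    (Finsupp.linearCombination ℂ tp.emb)

variable [CompleteSpace H] [CompleteSpace K]

lemma opAt_emb (i : Fin n) (A : H →L[ℂ] H) (x : Fin n → H) :
    tp.opAt i A (tp.emb x) = tp.emb (Function.update x i (A (x i))) := by
  have := LinearMap.extendOfNorm_eq tp.denseRange_lc ⟨_, tp.lc_bound i A⟩ (Finsupp.single x 1)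
  simp only [Finsupp.linearCombination_single, one_smul] at this
  exact this

lemma norm_opAt_le (i : Fin n) (A : H →L[ℂ] H) : ‖tp.opAt i A‖ ≤ ‖A‖ :=
  LinearMap.opNorm_extendOfNorm_le tp.denseRange_lc (norm_nonneg _) (tp.lc_bound i A)

lemma opAt_sub (i : Fin n) (A B : H →L[ℂ] H) :
    tp.opAt i (A - B) = tp.opAt i A - tp.opAt i B := by
  apply tp.clm_ext
  intro y
  simp only [opAt_emb, sub_apply]
  exact tp.mlin.map_update_sub y i (A (y i)) (B (y i))

lemma opAt_smul_one (i : Fin n) (c : ℂ) :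
    tp.opAt i (c • 1) = c • 1 := by
  apply tp.clm_ext
  intro y
  simp only [opAt_emb, smul_apply, one_apply_eq_self]
  have := tp.mlin.map_update_smul y i c (y i)
  rw [Function.update_eq_self] at this
  exact this

lemma opAt_mul (i : Fin n) (A B : H →L[ℂ] H) :
    tp.opAt i (A * B) = tp.opAt i A * tp.opAt i B := by
  apply tp.clm_ext
  intro y
  simp [opAt_emb]

lemma opAt_comm (i j : Fin n) (A : H →L[ℂ] H) :
    tp.opAt i A * tp.opAt j A = tp.opAt j A * tp.opAt i A := by
  by_cases hij : i = j
  · rw [hij]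
  apply tp.clm_ext
  intro y
  simp only [opAt_emb, mul_apply_eq_comp]
  rw [Function.update_of_ne hij, Function.update_of_ne (Ne.symm hij), Function.update_comm hij]

lemma continuous_opAt (i : Fin n) : Continuous (tp.opAt i) := by
  refine LipschitzWith.continuous (K := 1) (LipschitzWith.of_dist_le_mul fun A B => ?_)
  simp only [dist_eq_norm, ← opAt_sub, NNReal.coe_one, one_mul]
  exact tp.norm_opAt_le i _

/-- tensor power -/
noncomputable def tpow (A : H →L[ℂ] H) : K →L[ℂ] K :=
  ((List.finRange n).map (fun i => tp.opAt i A)).prod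

lemma list_prod_emb (A : H →L[ℂ] H) (l : List (Fin n)) (hl : l.Nodup) (x : Fin n → H) :
    (l.map (fun i => tp.opAt i A)).prod (tp.emb x)
      = tp.emb (fun i => if i ∈ l then A (x i) else x i) := by
  induction l with
  | nil => simp
  | cons j l ih =>
    rw [List.nodup_cons] at hl
    rw [List.map_cons, List.prod_cons, mul_apply_eq_comp, ih hl.2, opAt_emb]
    congr 1
    ext i
    by_cases hij : i = j
    · subst hij; simp [hl.1]
    · simp [hij]

lemma tpow_emb (A : H →L[ℂ] H) (x : Fin n → H) :
    tp.tpow A (tp.emb x) = tp.emb (fun i => A (x i)) := by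
  rw [tpow, list_prod_emb _ _ _ (List.nodup_finRange n)]
  simp

lemma norm_tpow_apply_le (A : H →L[ℂ] H) : ∀ v, ‖tp.tpow A v‖ ≤ ‖A‖ ^ n * ‖v‖ := by
  have : ∀ (l : List (Fin n)) v, ‖(l.map (fun i => tp.opAt i A)).prod v‖ ≤ ‖A‖ ^ l.length * ‖v‖ := by
    intro l v
    induction l with
    | nil => simp
    | cons j l ih =>
      rw [List.map_cons, List.prod_cons, mul_apply_eq_comp, List.length_cons, pow_succ']
      refine ((tp.opAt j A).le_opNorm _).trans ?_
      rw [mul_assoc]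
      gcongr
      exact tp.norm_opAt_le j A
  intro v
  simpa [tpow] using this (List.finRange n) v

lemma continuous_tpow : Continuous tp.tpow := by
  unfold tpow
  exact continuous_list_prod _ fun i _ => tp.continuous_opAt i

lemma eq_tpow {A : H →L[ℂ] H} {S : K →L[ℂ] K} (h : IsTensorPowerOp tp A S) : S = tp.tpow A :=
  tp.clm_ext fun y => by rw [h y, tpow_emb]

end TensorPowerStructure

lemma mem_closure_finiteRank {H : Type*} [NormedAddCommGroup H] [InnerProductSpace ℂ H]
    [CompleteSpace H] (T : H →L[ℂ] H) (hT : IsCompactOperator ⇑T) :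
    T ∈ closure {S : H →L[ℂ] H | FiniteDimensional ℂ (LinearMap.range S.toLinearMap)} := by
  rw [Metric.mem_closure_iff]
  intro ε hε
  have hc : IsCompact (closure (T '' Metric.closedBall 0 1)) :=
    IsCompactOperator.isCompact_closure_image_closedBall (f := T.toLinearMap) hT 1
  obtain ⟨t, ht, hcov⟩ := Metric.totallyBounded_iff.1 hc.totallyBounded (ε / 2) (half_pos hε)
  let V := Submodule.span ℂ t
  have : FiniteDimensional ℂ V := FiniteDimensional.span_of_finite ℂ ht
  refine ⟨V.starProjection ∘L T, ?_, ?_⟩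
  · refine Submodule.finiteDimensional_of_le (S₂ := V) ?_
    rintro _ ⟨x, rfl⟩
    exact V.starProjection_apply_mem (T x)
  · rw [dist_eq_norm]
    refine lt_of_le_of_lt ?_ (half_lt_self hε)
    refine ContinuousLinearMap.opNorm_le_of_unit_norm (half_pos hε).le fun x hx => ?_
    have hm : T x ∈ closure (T '' Metric.closedBall 0 1) :=
      subset_closure ⟨x, by simp [hx], rfl⟩
    obtain ⟨y, hy, hxy⟩ := Set.mem_iUnion₂.1 (hcov hm)
    have hyV : y ∈ V := Submodule.subset_span hy
    have h1 : ‖T x - V.starProjection (T x)‖ ≤ ‖T x - y‖ := by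
      rw [Submodule.starProjection_minimal]
      exact ciInf_le ⟨0, by rintro _ ⟨z, rfl⟩; exact norm_nonneg _⟩ (⟨y, hyV⟩ : V)
    rw [Metric.mem_ball, dist_eq_norm] at hxy
    exact h1.trans hxy.le

lemma finiteDimensional_eigenspace {K : Type*} [NormedAddCommGroup K] [InnerProductSpace ℂ K]
    (A : K →L[ℂ] K) (hA : IsCompactOperator ⇑A) (z : ℂ) (hz : z ≠ 0) :
    FiniteDimensional ℂ (Module.End.eigenspace A.toLinearMap z) := by
  set V := Module.End.eigenspace A.toLinearMap z with hV
  have hinv : ∀ v ∈ V, A.toLinearMap v ∈ V := by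
    intro v hv
    rw [Module.End.mem_eigenspace_iff.1 hv]
    exact V.smul_mem _ hv
  have hcl : IsClosed (V : Set K) := by
    have : (V : Set K) = {v | A v = z • v} := by
      ext v; exact Module.End.mem_eigenspace_iff
    rw [this]
    exact isClosed_eq A.continuous (continuous_const_smul z)
  have h1 := IsCompactOperator.restrict (f := A.toLinearMap) hA hinv hcl
  have h2 := h1.smul z⁻¹
  refine FiniteDimensional.of_isCompactOperator_id (𝕜 := ℂ) ?_
  refine cast (congrArg _ ?_) h2
  funext v
  apply Subtype.ext
  have := Module.End.mem_eigenspace_iff.1 v.2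
  simp only [ContinuousLinearMap.coe_coe] at this
  simp [LinearMap.restrict_apply, this, hz]

lemma common_eigen {X ι : Type*} [AddCommGroup X] [Module ℂ X] (f : ι → Module.End ℂ X)
    (hc : ∀ i j, Commute (f i) (f j)) (l : List ι) :
    ∀ (E : Submodule ℂ X), FiniteDimensional ℂ E → E ≠ ⊥ → (∀ i, ∀ v ∈ E, f i v ∈ E) →
      ∃ w ∈ E, w ≠ 0 ∧ ∀ i ∈ l, ∃ c : ℂ, f i w = c • w := by
  induction l with
  | nil =>
    intro E _ hE _
    obtain ⟨w, hw, h0⟩ := Submodule.exists_mem_ne_zero_of_ne_bot hE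
    exact ⟨w, hw, h0, by simp⟩
  | cons j l ih =>
    intro E hfd hE hinv
    have : Nontrivial E := Submodule.nontrivial_iff_ne_bot.2 hE
    obtain ⟨μ, hμ⟩ := Module.End.exists_eigenvalue ((f j).restrict (hinv j))
    obtain ⟨v, hv⟩ := hμ.exists_hasEigenvector
    have hv1 : f j (v : X) = μ • (v : X) := congrArg Subtype.val hv.apply_eq_smul
    have hv0 : (v : X) ≠ 0 := fun h => hv.2 (Subtype.ext h)
    obtain ⟨w, hw, hw0, hwl⟩ := ih (E ⊓ Module.End.eigenspace (f j) μ)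
      (Submodule.finiteDimensional_of_le inf_le_left)
      (fun h => hv0 ((Submodule.mem_bot ℂ).1
        (h ▸ ⟨v.2, Module.End.mem_eigenspace_iff.2 hv1⟩)))
      (by
        rintro i u ⟨hu1, hu2⟩
        refine ⟨hinv i u hu1, Module.End.mem_eigenspace_iff.2 ?_⟩
        have h1 := congrArg (fun g : Module.End ℂ X => g u) (hc j i).eq
        simp only [Module.End.mul_apply] at h1
        rw [h1, Module.End.mem_eigenspace_iff.1 hu2, map_smul])
    refine ⟨w, hw.1, hw0, ?_⟩
    intro i hi
    rcases List.mem_cons.1 hi with rfl | hi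
    · exact ⟨μ, Module.End.mem_eigenspace_iff.1 hw.2⟩
    · exact hwl i hi

namespace TensorPowerStructure

variable {H K : Type*} [NormedAddCommGroup H] [InnerProductSpace ℂ H]
  [NormedAddCommGroup K] [InnerProductSpace ℂ K] {n : ℕ} (tp : TensorPowerStructure H K n)
  [CompleteSpace H] [CompleteSpace K]

lemma tpow_finiteRank (S : H →L[ℂ] H)
    (hS : FiniteDimensional ℂ (LinearMap.range S.toLinearMap)) :
    IsCompactOperator ⇑(tp.tpow S) := by
  let V := LinearMap.range S.toLinearMap
  let M : MultilinearMap ℂ (fun _ : Fin n => V) K := tp.mlin.compLinearMap (fun _ => V.subtype)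
  let W := LinearMap.range (PiTensorProduct.lift M)
  have : FiniteDimensional ℂ W := inferInstance
  have hW : ∀ v, tp.tpow S v ∈ W := by
    intro v
    have hcl : IsClosed {v | tp.tpow S v ∈ W} :=
      (Submodule.closed_of_finiteDimensional W).preimage (tp.tpow S).continuous
    have hsub : ((Submodule.span ℂ (Set.range tp.emb) : Submodule ℂ K) : Set K) ⊆
        {v | tp.tpow S v ∈ W} := by
      have : Submodule.span ℂ (Set.range tp.emb) ≤ W.comap (tp.tpow S).toLinearMap := by
        rw [Submodule.span_le]
        rintro _ ⟨x, rfl⟩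
        change tp.tpow S (tp.emb x) ∈ W
        rw [tpow_emb]
        refine ⟨PiTensorProduct.tprod ℂ (fun i => (⟨S (x i), ⟨x i, rfl⟩⟩ : V)), ?_⟩
        rw [PiTensorProduct.lift.tprod]
        rfl
      exact this
    exact closure_minimal hsub hcl (tp.dense_span v)
  have h1 : IsCompactOperator ⇑W.subtypeL := by
    have := FiniteDimensional.proper ℂ W
    exact isCompactOperator_of_locallyCompactSpace_rng W.subtypeL
  exact h1.comp_clm ((tp.tpow S).codRestrict W hW)

lemma tpow_compact (T : H →L[ℂ] H) (hT : IsCompactOperator ⇑T) :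
    IsCompactOperator ⇑(tp.tpow T) := by
  have hcl : IsClosed {S : H →L[ℂ] H | IsCompactOperator ⇑(tp.tpow S)} :=
    isClosed_setOfPred_isCompactOperator.preimage tp.continuous_tpow
  exact closure_minimal (fun S hS => tp.tpow_finiteRank S hS) hcl (mem_closure_finiteRank T hT)

lemma mem_spectrum_of_opAt (T : H →L[ℂ] H) (i : Fin n) (c : ℂ) (w : K) (hw : w ≠ 0)
    (h : tp.opAt i T w = c • w) : c ∈ spectrum ℂ T := by
  by_contra hc
  rw [spectrum.notMem_iff] at hc
  obtain ⟨S, hS⟩ := hc.exists_left_inv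
  rw [Algebra.algebraMap_eq_smul_one] at hS
  have h1 := congrArg (tp.opAt i) hS
  rw [opAt_mul, opAt_sub, opAt_smul_one] at h1
  have h2 : tp.opAt i (1 : H →L[ℂ] H) = 1 := by
    simpa using tp.opAt_smul_one i 1
  rw [h2] at h1
  have h3 := congrArg (fun A : K →L[ℂ] K => A w) h1
  simp [h] at h3
  exact hw h3.symm

lemma tpow_eigen (T : H →L[ℂ] H) (hT : IsCompactOperator ⇑T) (z : ℂ) (hz : z ≠ 0) (v : K)
    (hv : v ≠ 0) (h : tp.tpow T v = z • v) :
    ∃ l : Fin n → ℂ, (∀ j, l j ∈ spectrum ℂ T) ∧ z = ∏ j, l j := by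
  have hfd := finiteDimensional_eigenspace (tp.tpow T) (tp.tpow_compact T hT) z hz
  have hcomm : ∀ i, Commute (tp.opAt i T) (tp.tpow T) := by
    intro i
    refine Commute.list_prod_right _ _ fun A hA => ?_
    obtain ⟨j, -, rfl⟩ := List.mem_map.1 hA
    exact tp.opAt_comm i j T
  obtain ⟨w, hw, hw0, hwl⟩ := common_eigen (fun i => (tp.opAt i T).toLinearMap)
    (fun i j => LinearMap.ext fun u =>
      congrArg (fun A : K →L[ℂ] K => A u) (tp.opAt_comm i j T)) (List.finRange n)
    (Module.End.eigenspace (tp.tpow T).toLinearMap z) hfd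
    (fun h0 => hv ((Submodule.mem_bot ℂ).1 (h0 ▸ Module.End.mem_eigenspace_iff.2 h)))
    (by
      intro i u hu
      have hu' : tp.tpow T u = z • u := Module.End.mem_eigenspace_iff.1 hu
      refine Module.End.mem_eigenspace_iff.2 ?_
      have h1 := congrArg (fun A : K →L[ℂ] K => A u) (hcomm i).eq
      simp only [mul_apply_eq_comp] at h1
      change tp.tpow T (tp.opAt i T u) = z • tp.opAt i T u
      rw [← h1, hu', map_smul])
  have hw' : tp.tpow T w = z • w := Module.End.mem_eigenspace_iff.1 hw
  choose l hl using fun i => hwl i (List.mem_finRange i)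
  refine ⟨l, fun j => tp.mem_spectrum_of_opAt T j (l j) w hw0 (hl j), ?_⟩
  have hp : ∀ L : List (Fin n), (L.map (fun i => tp.opAt i T)).prod w = (L.map l).prod • w := by
    intro L
    induction L with
    | nil => simp
    | cons j L ih =>
      have := hl j
      simp only [ContinuousLinearMap.coe_coe] at this
      rw [List.map_cons, List.prod_cons, mul_apply_eq_comp, ih, map_smul, this, List.map_cons,
        List.prod_cons, smul_smul, mul_comm]
  have h5 := hp (List.finRange n)
  have h6 : z • w = (∏ j, l j) • w := by
    rw [← hw', ← List.prod_ofFn, List.ofFn_eq_map]; exact h5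
  exact smul_left_injective ℂ hw0 h6

end TensorPowerStructure

section Fock

variable {H F : Type*} [NormedAddCommGroup H] [InnerProductSpace ℂ H] [CompleteSpace H]
    [NormedAddCommGroup F] [InnerProductSpace ℂ F] [CompleteSpace F]
    (Hn : ℕ → Type*) [∀ n, NormedAddCommGroup (Hn n)]
    [∀ n, InnerProductSpace ℂ (Hn n)] [∀ n, CompleteSpace (Hn n)]
    (tp : ∀ n, TensorPowerStructure H (Hn n) n)
    (J : ∀ n, Hn n →ₗᵢ[ℂ] F)

lemma fock_adj_same (n : ℕ) (x : Hn n) :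
    ContinuousLinearMap.adjoint (J n).toContinuousLinearMap (J n x) = x := by
  refine ext_inner_left ℂ fun y => ?_
  rw [ContinuousLinearMap.adjoint_inner_right]
  exact (J n).inner_map_map y x

lemma fock_adj_ne
    (horth : ∀ n m, n ≠ m → ∀ (x : Hn n) (y : Hn m), ⟪J n x, J m y⟫_ℂ = 0)
    (n m : ℕ) (h : n ≠ m) (x : Hn m) :
    ContinuousLinearMap.adjoint (J n).toContinuousLinearMap (J m x) = 0 := by
  refine ext_inner_left ℂ fun y => ?_
  rw [ContinuousLinearMap.adjoint_inner_right, inner_zero_right]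
  exact horth n m h y x

lemma fock_mem_span (v : F) (hv : v ∈ Submodule.span ℂ (⋃ n : ℕ, Set.range (J n))) :
    ∃ (s : Finset ℕ) (x : ∀ n, Hn n), v = ∑ n ∈ s, J n (x n) := by
  have h1 : Submodule.span ℂ (⋃ n : ℕ, Set.range (J n))
      ≤ ⨆ n, LinearMap.range (J n).toLinearMap := by
    rw [Submodule.span_le]
    intro w hw
    obtain ⟨n, y, rfl⟩ := Set.mem_iUnion.1 hw
    exact Submodule.mem_iSup_of_mem n ⟨y, rfl⟩
  obtain ⟨f, hf, rfl⟩ := (Submodule.mem_iSup_iff_exists_finsupp _ _).1 (h1 hv)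
  choose x hx using hf
  refine ⟨f.support, x, ?_⟩
  exact Finset.sum_congr rfl fun n _ => (hx n).symm

variable (horth : ∀ n m, n ≠ m → ∀ (x : Hn n) (y : Hn m), ⟪J n x, J m y⟫_ℂ = 0)
    (hdense : Dense ((Submodule.span ℂ
      (⋃ n : ℕ, Set.range (J n)) : Submodule ℂ F) : Set F))
    (T : H →L[ℂ] H) (hT : ‖T‖ < 1) (hTcomp : IsCompactOperator ⇑T)
    (Tn : ∀ n, Hn n →L[ℂ] Hn n) (hTn : ∀ n, IsTensorPowerOp (tp n) T (Tn n))
    (G : F →L[ℂ] F) (hG : ∀ (n : ℕ) (x : Hn n), G (J n x) = J n (Tn n x))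

/-- truncation of `G` to finitely many particles -/
noncomputable def fockTrunc (N : ℕ) : F →L[ℂ] F :=
  ∑ n ∈ Finset.range N, (J n).toContinuousLinearMap ∘L (Tn n) ∘L
    ContinuousLinearMap.adjoint (J n).toContinuousLinearMap

include horth in
lemma fockTrunc_apply (N m : ℕ) (x : Hn m) :
    fockTrunc Hn J Tn N (J m x) = if m < N then J m (Tn m x) else 0 := by
  have h0 : ∀ n, n ≠ m → ((J n).toContinuousLinearMap ∘L (Tn n) ∘L
    ContinuousLinearMap.adjoint (J n).toContinuousLinearMap) (J m x) = 0 := by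
    intro n hn
    simp [fock_adj_ne Hn J horth n m hn x]
  unfold fockTrunc
  rw [sum_apply]
  split_ifs with h
  · rw [Finset.sum_eq_single m (fun n _ hn => h0 n hn)
      (fun hm => absurd (Finset.mem_range.2 h) hm)]
    simp [fock_adj_same]
  · refine Finset.sum_eq_zero fun n hn => h0 n ?_
    rintro rfl
    exact h (Finset.mem_range.1 hn)

include horth hdense hT hTn hG in
lemma fock_norm_sub_le (N : ℕ) : ‖G - fockTrunc Hn J Tn N‖ ≤ ‖T‖ ^ N := by
  have hort : OrthogonalFamily ℂ Hn J := fun n m h x y => horth n m h x y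
  refine ContinuousLinearMap.opNorm_le_bound _ (by positivity) fun v => ?_
  have hcl : IsClosed {v : F | ‖(G - fockTrunc Hn J Tn N) v‖ ≤ ‖T‖ ^ N * ‖v‖} :=
    isClosed_le (by fun_prop) (by fun_prop)
  refine closure_minimal ?_ hcl (hdense v)
  intro v hv
  obtain ⟨s, x, rfl⟩ := fock_mem_span Hn J v hv
  have h1 : (G - fockTrunc Hn J Tn N) (∑ n ∈ s, J n (x n))
      = ∑ n ∈ s, J n (if n < N then 0 else Tn n (x n)) := by
    rw [map_sum]
    refine Finset.sum_congr rfl fun n _ => ?_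
    rw [sub_apply, hG, fockTrunc_apply Hn J horth]
    split_ifs <;> simp
  change ‖_‖ ≤ _
  rw [h1]
  refine le_of_sq_le_sq ?_ (by positivity)
  rw [mul_pow, hort.norm_sum, hort.norm_sum, Finset.mul_sum]
  refine Finset.sum_le_sum fun n _ => ?_
  rw [← mul_pow]
  refine pow_le_pow_left₀ (norm_nonneg _) ?_ 2
  split_ifs with h
  · rw [norm_zero]; positivity
  · rw [(tp n).eq_tpow (hTn n)]
    refine ((tp n).norm_tpow_apply_le T (x n)).trans ?_
    gcongr ?_ * _
    exact pow_le_pow_of_le_one (norm_nonneg _) hT.le (not_lt.1 h)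

include horth hdense hT hTn hG hTcomp in
lemma fock_compact : IsCompactOperator ⇑G := by
  have hlim : Filter.Tendsto (fun N => fockTrunc Hn J Tn N) Filter.atTop (nhds G) := by
    rw [tendsto_iff_norm_sub_tendsto_zero]
    refine squeeze_zero (fun _ => norm_nonneg _) (fun N => ?_)
      (tendsto_pow_atTop_nhds_zero_of_lt_one (norm_nonneg T) hT)
    rw [norm_sub_rev]
    exact fock_norm_sub_le Hn tp J horth hdense T hT Tn hTn G hG N
  refine isCompactOperator_of_tendsto hlim (Filter.Eventually.of_forall fun N => ?_)
  have : fockTrunc Hn J Tn N ∈ compactOperator (RingHom.id ℂ) F F := by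
    refine Submodule.sum_mem _ fun n _ => ?_
    have hc : IsCompactOperator ⇑(Tn n) := by
      rw [(tp n).eq_tpow (hTn n)]; exact (tp n).tpow_compact T hTcomp
    exact (hc.comp_clm _).clm_comp (J n).toContinuousLinearMap
  exact this

include hTcomp hTn hG in
lemma fock_prod_mem (hGc : IsCompactOperator ⇑G) (n : ℕ) (l : Fin n → ℂ)
    (hl : ∀ j, l j ∈ spectrum ℂ T) (hl0 : ∏ j, l j ≠ 0) : ∏ j, l j ∈ spectrum ℂ G := by
  have h1 : ∀ j, ∃ x : H, x ≠ 0 ∧ T x = l j • x := by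
    intro j
    have hj : l j ≠ 0 := Finset.prod_ne_zero_iff.1 hl0 j (Finset.mem_univ j)
    obtain ⟨x, hx⟩ :=
      ((hTcomp.hasEigenvalue_iff_mem_spectrum hj).2 (hl j)).exists_hasEigenvector
    exact ⟨x, hx.2, hx.apply_eq_smul⟩
  choose x hx0 hx using h1
  have h2 : Tn n ((tp n).emb x) = (∏ j, l j) • (tp n).emb x := by
    rw [hTn n x]
    simp only [hx]
    exact (tp n).mlin.map_smul_univ l x
  have h3 : J n ((tp n).emb x) ≠ 0 := by
    rw [← norm_ne_zero_iff, LinearIsometry.norm_map, (tp n).norm_emb]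
    exact Finset.prod_ne_zero_iff.2 fun j _ => norm_ne_zero_iff.2 (hx0 j)
  refine (hGc.hasEigenvalue_iff_mem_spectrum hl0).1 ?_
  refine Module.End.hasEigenvalue_of_hasEigenvector (x := J n ((tp n).emb x))
    ⟨Module.End.mem_eigenspace_iff.2 ?_, h3⟩
  change G _ = _
  rw [hG, h2, map_smul]

include horth hdense hG in
lemma fock_adj_comm (n : ℕ) (v : F) :
    ContinuousLinearMap.adjoint (J n).toContinuousLinearMap (G v)
      = Tn n (ContinuousLinearMap.adjoint (J n).toContinuousLinearMap v) := by
  have : ContinuousLinearMap.adjoint (J n).toContinuousLinearMap ∘L G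
      = Tn n ∘L ContinuousLinearMap.adjoint (J n).toContinuousLinearMap := by
    refine ContinuousLinearMap.ext_on hdense ?_
    intro w hw
    obtain ⟨m, y, rfl⟩ := Set.mem_iUnion.1 hw
    simp only [ContinuousLinearMap.comp_apply, hG]
    by_cases h : n = m
    · subst h
      rw [fock_adj_same, fock_adj_same]
    · rw [fock_adj_ne Hn J horth n m h, fock_adj_ne Hn J horth n m h, map_zero]
  exact congrArg (fun A : F →L[ℂ] Hn n => A v) this

include horth hdense hG hTcomp hTn in
lemma fock_mem_prod (hGc : IsCompactOperator ⇑G) (z : ℂ) (hz : z ∈ spectrum ℂ G) (hz0 : z ≠ 0) :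
    ∃ (n : ℕ) (l : Fin n → ℂ), (∀ j, l j ∈ spectrum ℂ T) ∧ z = ∏ j, l j := by
  obtain ⟨v, hv⟩ := ((hGc.hasEigenvalue_iff_mem_spectrum hz0).2 hz).exists_hasEigenvector
  have hGv : G v = z • v := hv.apply_eq_smul
  by_cases hall : ∀ n, ContinuousLinearMap.adjoint (J n).toContinuousLinearMap v = 0
  · exfalso
    apply hv.2
    refine hdense.eq_zero_of_inner_right ℂ fun w hw => ?_
    induction hw using Submodule.span_induction with
    | mem w hw =>
      obtain ⟨m, y, rfl⟩ := Set.mem_iUnion.1 hw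
      have := ContinuousLinearMap.adjoint_inner_right (J m).toContinuousLinearMap y v
      rw [hall m, inner_zero_right] at this
      exact this.symm
    | zero => simp
    | add a b _ _ ha hb => simp [inner_add_left, ha, hb]
    | smul c a _ ha => simp [inner_smul_left, ha]
  · push Not at hall
    obtain ⟨n, hn⟩ := hall
    have h1 := fock_adj_comm Hn J horth hdense Tn G hG n v
    rw [hGv, map_smul, (tp n).eq_tpow (hTn n)] at h1
    exact ⟨n, (tp n).tpow_eigen T hTcomp z hz0 _ hn h1.symm⟩

include hT hTn hG in
lemma fock_zero_mem [Nontrivial H] : (0 : ℂ) ∈ spectrum ℂ G := by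
  rw [spectrum.zero_mem_iff]
  intro hu
  obtain ⟨S, hS⟩ := hu.exists_left_inv
  obtain ⟨e, he⟩ := exists_norm_eq H zero_le_one
  have key : ∀ n : ℕ, 1 ≤ ‖S‖ * ‖T‖ ^ n := by
    intro n
    have hx : ‖(tp n).emb (fun _ => e)‖ = 1 := by rw [(tp n).norm_emb]; simp [he]
    have h1 := congrArg (fun A : F →L[ℂ] F => A (J n ((tp n).emb (fun _ => e)))) hS
    simp only [mul_apply_eq_comp, one_apply_eq_self, hG] at h1
    have h2 : ‖S (J n (Tn n ((tp n).emb fun _ => e)))‖ = 1 := by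
      rw [h1, LinearIsometry.norm_map, hx]
    rw [← h2]
    refine (S.le_opNorm _).trans ?_
    gcongr
    rw [LinearIsometry.norm_map, (tp n).eq_tpow (hTn n)]
    refine ((tp n).norm_tpow_apply_le T _).trans ?_
    rw [hx, mul_one]
  have hlim := (tendsto_pow_atTop_nhds_zero_of_lt_one (norm_nonneg T) hT).const_mul ‖S‖
  rw [mul_zero] at hlim
  have := ge_of_tendsto' hlim key
  norm_num at this

end Fock


/-- If `T` is a compact operator on a nonzero complex Hilbert space with `‖T‖ < 1`,
then the second quantization `Γ(T)` is a compact operator on the Fock space and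
`σ(Γ(T)) = {0} ∪ {1} ∪ ⋃_{n≥1} { λ₁⋯λₙ : λⱼ ∈ σ(T) }` (no closure needed). -/
theorem spectrum_secondQuantization_of_compact
    {H F : Type*} [NormedAddCommGroup H] [InnerProductSpace ℂ H] [CompleteSpace H]
    [Nontrivial H]
    [NormedAddCommGroup F] [InnerProductSpace ℂ F] [CompleteSpace F]
    (Hn : ℕ → Type*) [∀ n, NormedAddCommGroup (Hn n)]
    [∀ n, InnerProductSpace ℂ (Hn n)] [∀ n, CompleteSpace (Hn n)]
    (tp : ∀ n, TensorPowerStructure H (Hn n) n)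
    (J : ∀ n, Hn n →ₗᵢ[ℂ] F)
    (horth : ∀ n m, n ≠ m → ∀ (x : Hn n) (y : Hn m), ⟪J n x, J m y⟫_ℂ = 0)
    (hdense : Dense ((Submodule.span ℂ
      (⋃ n : ℕ, Set.range (J n)) : Submodule ℂ F) : Set F))
    (T : H →L[ℂ] H) (hT : ‖T‖ < 1) (hTcomp : IsCompactOperator ⇑T)
    (Tn : ∀ n, Hn n →L[ℂ] Hn n) (hTn : ∀ n, IsTensorPowerOp (tp n) T (Tn n))
    (G : F →L[ℂ] F) (hG : ∀ (n : ℕ) (x : Hn n), G (J n x) = J n (Tn n x)) :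
    IsCompactOperator ⇑G ∧
      spectrum ℂ G = {0} ∪ {1} ∪ ⋃ n : ℕ,
        {z : ℂ | ∃ l : Fin (n + 1) → ℂ,
          (∀ j, l j ∈ spectrum ℂ T) ∧ z = ∏ j, l j} := by
  have hGc := fock_compact Hn tp J horth hdense T hT hTcomp Tn hTn G hG
  refine ⟨hGc, Set.Subset.antisymm ?_ ?_⟩
  · intro z hz
    by_cases hz0 : z = 0
    · exact Or.inl (Or.inl hz0)
    obtain ⟨n, l, hl, hzl⟩ :=
      fock_mem_prod Hn tp J horth hdense T hTcomp Tn hTn G hG hGc z hz hz0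
    cases n with
    | zero => exact Or.inl (Or.inr (by simpa using hzl))
    | succ n => exact Or.inr (Set.mem_iUnion.2 ⟨n, l, hl, hzl⟩)
  · have h0 : (0 : ℂ) ∈ spectrum ℂ G := fock_zero_mem Hn tp J T hT Tn hTn G hG
    rintro z ((hz | hz) | hz)
    · rw [Set.mem_singleton_iff.1 hz]
      exact h0
    · rw [Set.mem_singleton_iff.1 hz]
      have := fock_prod_mem Hn tp J T hTcomp Tn hTn G hG hGc 0 (fun _ => 1)
        (fun j => j.elim0) (by simp)
      simpa using this
    · obtain ⟨n, l, hl, rfl⟩ := Set.mem_iUnion.1 hz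
      by_cases hl0 : ∏ j, l j = 0
      · rw [hl0]
        exact h0
      · exact fock_prod_mem Hn tp J T hTcomp Tn hTn G hG hGc (n + 1) l hl hl0
end

section
/- Let A generate a strongly continuous, eventually norm-continuous semigroup on a Banach space X. Then for every a ∈ ℝ, the set { λ ∈ σ(A) : Re λ ≥ a } is bounded. -/
open Filter Topology MeasureTheory Set

lemma exists_strong_integral {X : Type*} [NormedAddCommGroup X] [NormedSpace ℂ X]
    [CompleteSpace X] (F : ℝ → X →L[ℂ] X) (hF : ∀ x, Continuous fun t => F t x) (a b : ℝ) :
    ∃ I : X →L[ℂ] X, ∀ x, I x = ∫ s in a..b, F s x := by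
  obtain ⟨C, hC⟩ := banach_steinhaus (g := fun i : uIcc a b => F i) (fun x => by
    obtain ⟨C, hC⟩ := (isCompact_uIcc (a := a) (b := b)).exists_bound_of_continuousOn
      (hF x).continuousOn
    exact ⟨C, fun i => hC i i.2⟩)
  refine ⟨LinearMap.mkContinuous
    { toFun := fun x => ∫ s in a..b, F s x
      map_add' := fun x y => by
        simp only [map_add]
        exact intervalIntegral.integral_add ((hF x).intervalIntegrable _ _)
          ((hF y).intervalIntegrable _ _)
      map_smul' := fun c x => by
        simp only [map_smul, RingHom.id_apply]
        exact intervalIntegral.integral_smul _ _ } (C * |b - a|) (fun x => ?_), fun x => rfl⟩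
  have := intervalIntegral.norm_integral_le_of_norm_le_const (a := a) (b := b)
    (f := fun s => F s x) (C := C * ‖x‖) (fun s hs => by
      exact (F s).le_of_opNorm_le (hC ⟨s, uIoc_subset_uIcc hs⟩) x)
  simp only [LinearMap.coe_mk, AddHom.coe_mk]
  linarith

lemma exists_resolvent {X : Type*} [NormedAddCommGroup X] [NormedSpace ℂ X]
    [CompleteSpace X] (U : ℝ → X →L[ℂ] X) (hU : ∀ x, Continuous fun t => U t x)
    (hU0 : U 0 = 1)
    (hUadd : ∀ s t : ℝ, 0 ≤ s → 0 ≤ t → U (s + t) = (U s).comp (U t))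
    (t₁ δ : ℝ) (ht₁ : 0 ≤ t₁) (hδ : 0 < δ) (K : X →L[ℂ] X)
    (hK : ∀ x, K x = δ⁻¹ • ∫ t in t₁..(t₁ + δ), U t x) (hK1 : ‖K‖ < 1) :
    ∃ R : X →L[ℂ] X,
      (∀ x, Tendsto (fun h : ℝ => h⁻¹ • (U h (R x) - R x)) (𝓝[>] 0) (𝓝 (-x))) ∧
      (∀ y w, Tendsto (fun h : ℝ => h⁻¹ • (U h y - y)) (𝓝[>] 0) (𝓝 w) → R w = -y) := by
  choose V hV using fun t => exists_strong_integral U hU 0 t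
  have hVc : ∀ x, Continuous fun t => V t x := fun x => by
    simp only [hV]
    exact intervalIntegral.continuous_primitive (fun a b => (hU x).intervalIntegrable a b) 0
  obtain ⟨B', hB'⟩ := exists_strong_integral V hVc t₁ (t₁ + δ)
  set B : X →L[ℂ] X := (δ⁻¹ : ℂ) • B' with hBdef
  have hB : ∀ x, B x = δ⁻¹ • ∫ t in t₁..(t₁ + δ), V t x := fun x => by
    rw [← hB', hBdef, ContinuousLinearMap.smul_apply, ← Complex.ofReal_inv, Complex.coe_smul]
  -- commutation
  have hUU : ∀ s t, 0 ≤ s → 0 ≤ t → ∀ x, U s (U t x) = U t (U s x) := fun s t hs ht x => by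
    have h1 := hUadd s t hs ht
    rw [add_comm, hUadd t s ht hs] at h1
    exact (DFunLike.congr_fun h1 x).symm
  have hUV : ∀ s t, 0 ≤ s → 0 ≤ t → ∀ x, U s (V t x) = V t (U s x) := fun s t hs ht x => by
    rw [hV, hV, ← ContinuousLinearMap.intervalIntegral_comp_comm _ ((hU x).intervalIntegrable _ _)]
    refine intervalIntegral.integral_congr fun r hr => ?_
    rw [uIcc_of_le ht] at hr
    exact hUU s r hs hr.1 x
  have hUB : ∀ s, 0 ≤ s → ∀ x, U s (B x) = B (U s x) := fun s hs x => by
    rw [hB, hB, ContinuousLinearMap.map_smul_of_tower,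
      ← ContinuousLinearMap.intervalIntegral_comp_comm _ ((hVc x).intervalIntegrable _ _)]
    congr 1
    refine intervalIntegral.integral_congr fun r hr => ?_
    rw [uIcc_of_le (by linarith)] at hr
    exact hUV s r hs (ht₁.trans hr.1) x
  have key1 : ∀ h t, 0 ≤ h → 0 ≤ t → ∀ x, U h (V t x) - V t x = U t (V h x) - V h x := by
    have aux : ∀ h t, 0 ≤ h → 0 ≤ t → ∀ x, U h (V t x) = V (t + h) x - V h x := by
      intro h t hh ht x
      rw [hV t, ← ContinuousLinearMap.intervalIntegral_comp_comm _
        ((hU x).intervalIntegrable _ _), hV, hV,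
        intervalIntegral.integral_interval_sub_left ((hU x).intervalIntegrable _ _)
        ((hU x).intervalIntegrable _ _)]
      have := intervalIntegral.integral_comp_add_right (a := 0) (b := t) (fun s => U s x) h
      rw [zero_add] at this
      rw [← this]
      refine intervalIntegral.integral_congr fun r hr => ?_
      rw [uIcc_of_le ht] at hr
      rw [add_comm r h, hUadd h r hh hr.1]; rfl
    intro h t hh ht x
    rw [aux h t hh ht, aux t h ht hh, add_comm t h]; abel
  have key2 : ∀ h, 0 ≤ h → ∀ x, U h (B x) - B x = K (V h x) - V h x := by
    intro h hh x
    have e1 : U h (B x) - B x = δ⁻¹ • ∫ t in t₁..(t₁ + δ), (U h (V t x) - V t x) := by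
      rw [intervalIntegral.integral_sub, smul_sub, ← hB,
        ContinuousLinearMap.intervalIntegral_comp_comm _ ((hVc x).intervalIntegrable _ _),
        hB, ContinuousLinearMap.map_smul_of_tower]
      · exact ((U h).continuous.comp (hVc x)).intervalIntegrable _ _
      · exact (hVc x).intervalIntegrable _ _
    have e2 : K (V h x) - V h x = δ⁻¹ • ∫ t in t₁..(t₁ + δ), (U t (V h x) - V h x) := by
      rw [intervalIntegral.integral_sub ((hU _).intervalIntegrable _ _)
        (continuous_const.intervalIntegrable _ _), smul_sub, ← hK,
        intervalIntegral.integral_const, add_sub_cancel_left, smul_smul,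
        inv_mul_cancel₀ hδ.ne', one_smul]
    rw [e1, e2]
    congr 1
    refine intervalIntegral.integral_congr fun r hr => ?_
    rw [uIcc_of_le (by linarith)] at hr
    exact key1 h r hh (ht₁.trans hr.1) x
  have hVlim : ∀ x, Tendsto (fun h : ℝ => h⁻¹ • V h x) (𝓝[>] 0) (𝓝 x) := by
    intro x
    have hd : HasDerivAt (fun t => V t x) x 0 := by
      have := intervalIntegral.integral_hasDerivAt_right (a := 0) (b := 0)
        ((hU x).intervalIntegrable _ _)
        ((hU x).stronglyMeasurableAtFilter _ _) (hU x).continuousAt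
      simpa [hV, hU0] using this
    have := hd.tendsto_slope_zero_right
    simpa [hV] using this
  have hBlim : ∀ x, Tendsto (fun h : ℝ => h⁻¹ • (U h (B x) - B x)) (𝓝[>] 0) (𝓝 (K x - x)) := by
    intro x
    have h1 : Tendsto (fun h : ℝ => (K - 1) (h⁻¹ • V h x)) (𝓝[>] 0) (𝓝 ((K - 1) x)) :=
      ((K - 1).continuous.tendsto _).comp (hVlim x)
    refine (h1.congr' ?_)
    filter_upwards [self_mem_nhdsWithin] with h hh
    rw [key2 h (le_of_lt hh), ContinuousLinearMap.map_smul_of_tower]; rfl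
  set W := Units.oneSub K hK1 with hW
  have hWv : (W : X →L[ℂ] X) = 1 - K := rfl
  have hW1 : ∀ x, (↑W⁻¹ : X →L[ℂ] X) x - K ((↑W⁻¹ : X →L[ℂ] X) x) = x := fun x => by
    have := DFunLike.congr_fun (W.mul_inv) x
    rw [hWv] at this
    exact this
  have hW2 : ∀ x, (↑W⁻¹ : X →L[ℂ] X) (x - K x) = x := fun x => by
    have := DFunLike.congr_fun (W.inv_mul) x
    rw [hWv] at this
    exact this
  have hR : ∀ x, Tendsto (fun h : ℝ => h⁻¹ • (U h (B ((↑W⁻¹ : X →L[ℂ] X) x))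
      - B ((↑W⁻¹ : X →L[ℂ] X) x))) (𝓝[>] 0) (𝓝 (-x)) := fun x => by
    have h1 := hBlim ((↑W⁻¹ : X →L[ℂ] X) x)
    have h2 := hW1 x
    rwa [← neg_sub, h2] at h1
  have hL : ∀ y w, Tendsto (fun h : ℝ => h⁻¹ • (U h y - y)) (𝓝[>] 0) (𝓝 w) →
      (↑W⁻¹ : X →L[ℂ] X) (B w) = -y := fun y w hyw => by
    have h1 := (B.continuous.tendsto _).comp hyw
    have h2 : Tendsto (B ∘ fun h : ℝ => h⁻¹ • (U h y - y)) (𝓝[>] 0) (𝓝 (K y - y)) := by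
      refine (hBlim y).congr' ?_
      filter_upwards [self_mem_nhdsWithin] with h hh
      rw [hUB h (le_of_lt hh), Function.comp, ContinuousLinearMap.map_smul_of_tower, map_sub]
    rw [tendsto_nhds_unique h1 h2, ← neg_sub, map_neg, hW2]
  refine ⟨(↑W⁻¹ : X →L[ℂ] X).comp B, fun x => ?_, hL⟩
  have : (↑W⁻¹ : X →L[ℂ] X) (B x) = B ((↑W⁻¹ : X →L[ℂ] X) x) := by
    have := hL _ _ (hR x)
    simpa using this
  simp only [ContinuousLinearMap.comp_apply, this]
  exact hR x


/-- If `A` is the generator of a strongly continuous semigroup `(S t)` on a complex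
Banach space which is norm continuous for `t > t₀`, then for every `a ∈ ℝ` the set
of spectral values of `A` with real part `≥ a` is bounded.  Here the spectrum of the
(in general unbounded) operator `A` with domain `D` is the complement of the set of
`z ∈ ℂ` admitting a bounded everywhere-defined resolvent `R = (z - A)⁻¹`. -/
theorem isBounded_spectrum_re_ge_of_eventually_norm_continuous
    {X : Type*} [NormedAddCommGroup X] [NormedSpace ℂ X] [CompleteSpace X]
    (S : ℝ → X →L[ℂ] X)
    (hS0 : S 0 = 1)
    (hSadd : ∀ s t : ℝ, 0 ≤ s → 0 ≤ t → S (s + t) = (S s).comp (S t))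
    (hScont : ∀ x : X, ContinuousOn (fun t => S t x) (Set.Ici (0 : ℝ)))
    (t₀ : ℝ) (ht₀ : 0 ≤ t₀)
    (hnormcont : ContinuousOn S (Set.Ioi t₀))
    (D : Submodule ℂ X) (A : D →ₗ[ℂ] X)
    (hdom : ∀ x : X, x ∈ D ↔ ∃ y : X,
      Filter.Tendsto (fun t : ℝ => t⁻¹ • (S t x - x))
        (nhdsWithin 0 (Set.Ioi 0)) (nhds y))
    (hA : ∀ x : D,
      Filter.Tendsto (fun t : ℝ => t⁻¹ • (S t (x : X) - (x : X)))
        (nhdsWithin 0 (Set.Ioi 0)) (nhds (A x)))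
    (a : ℝ) :
    Bornology.IsBounded {z : ℂ | a ≤ z.re ∧
      ¬ ∃ R : X →L[ℂ] X,
          (∀ x : X, ∃ hx : R x ∈ D, A ⟨R x, hx⟩ = z • R x - x) ∧
          (∀ y : D, R (z • (y : X) - A y) = y)} := by
  set t₁ := t₀ + 1 with ht₁
  set C := Real.exp (|a| * (t₁ + 1)) with hC
  have hCpos : 0 < C := Real.exp_pos _
  have hca : ContinuousAt S t₁ := hnormcont.continuousAt (Ioi_mem_nhds (by linarith))
  obtain ⟨δ', hδ', hδ'S⟩ := Metric.continuousAt_iff.1 hca (1 / (4 * C)) (by positivity)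
  set δ := min (δ' / 2) 1 with hδ
  have hδpos : 0 < δ := by positivity
  have hδ1 : δ ≤ 1 := min_le_right _ _
  have hδ2 : δ < δ' := (min_le_left _ _).trans_lt (by linarith)
  refine (Metric.isBounded_closedBall (x := (0 : ℂ)) (r := 8 * C * ‖S t₁‖ / δ)).subset ?_
  rintro z ⟨hza, hz⟩
  rw [mem_closedBall_zero_iff]
  by_contra! hzr
  apply hz
  have hz0 : 0 < ‖z‖ := lt_of_le_of_lt (by positivity) hzr
  have hzne : z ≠ 0 := norm_pos_iff.1 hz0
  have hexp : ∀ s : ℝ, 0 ≤ s → s ≤ t₁ + 1 → ‖Complex.exp (-z * s)‖ ≤ C := by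
    intro s hs hs1
    rw [Complex.norm_exp, hC]
    apply Real.exp_le_exp.2
    simp only [Complex.mul_re, Complex.neg_re, Complex.ofReal_re, Complex.neg_im,
      Complex.ofReal_im, mul_zero, sub_zero]
    have : -z.re ≤ |a| := by linarith [neg_abs_le a]
    calc -z.re * s ≤ |a| * s := by gcongr
      _ ≤ _ := by gcongr
  set U : ℝ → X →L[ℂ] X := fun t => Complex.exp (-z * t) • S (max t 0) with hUdef
  have hU : ∀ x, Continuous fun t => U t x := fun x => by
    have h1 : Continuous fun t : ℝ => S (max t 0) x :=
      (hScont x).comp_continuous (f := fun t : ℝ => max t 0) (by fun_prop)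
        (fun t => mem_Ici.2 (le_max_right _ _))
    have h2 : Continuous fun t : ℝ => Complex.exp (-z * t) := by fun_prop
    exact h2.smul h1
  have hUpos : ∀ t, 0 ≤ t → U t = Complex.exp (-z * t) • S t := fun t ht => by
    simp only [hUdef, max_eq_left ht]
  have hU0 : U 0 = 1 := by rw [hUpos 0 le_rfl, hS0]; simp
  have hUadd : ∀ s t : ℝ, 0 ≤ s → 0 ≤ t → U (s + t) = (U s).comp (U t) := fun s t hs ht => by
    rw [hUpos s hs, hUpos t ht, hUpos _ (add_nonneg hs ht), hSadd s t hs ht]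
    ext x
    simp only [ContinuousLinearMap.smul_apply, ContinuousLinearMap.comp_apply, map_smul, smul_smul]
    rw [← Complex.exp_add]
    congr 2
    push_cast; ring
  obtain ⟨K', hK'⟩ := exists_strong_integral U hU t₁ (t₁ + δ)
  set K : X →L[ℂ] X := (δ⁻¹ : ℂ) • K' with hKdef
  have hK : ∀ x, K x = δ⁻¹ • ∫ t in t₁..(t₁ + δ), U t x := fun x => by
    rw [← hK', hKdef, ContinuousLinearMap.smul_apply, ← Complex.ofReal_inv, Complex.coe_smul]
  have hK1 : ‖K‖ < 1 := by
    refine lt_of_le_of_lt (K.opNorm_le_bound (M := 1 / 2) (by norm_num) fun x => ?_) (by norm_num)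
    have hce : Continuous fun t : ℝ => Complex.exp (-z * t) := by fun_prop
    have hce2 : Continuous fun t : ℝ => Complex.exp (-z * t) • S t₁ x := hce.smul continuous_const
    have hsplit : ∫ t in t₁..(t₁ + δ), U t x =
        (∫ t in t₁..(t₁ + δ), (U t x - Complex.exp (-z * t) • S t₁ x)) +
        (∫ t in t₁..(t₁ + δ), Complex.exp (-z * t)) • S t₁ x := by
      rw [← intervalIntegral.integral_smul_const, intervalIntegral.integral_sub
        ((hU _).intervalIntegrable _ _)
        (hce2.intervalIntegrable _ _), sub_add_cancel]
    have b1 : ‖∫ t in t₁..(t₁ + δ), (U t x - Complex.exp (-z * t) • S t₁ x)‖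
        ≤ (C * (1 / (4 * C) * ‖x‖)) * |t₁ + δ - t₁| := by
      refine intervalIntegral.norm_integral_le_of_norm_le_const fun s hs => ?_
      rw [uIoc_of_le (by linarith)] at hs
      rw [hUpos s (by linarith [hs.1]), ContinuousLinearMap.smul_apply, ← smul_sub, norm_smul]
      gcongr
      · exact hexp s (by linarith [hs.1]) (by linarith [hs.2])
      · rw [← ContinuousLinearMap.sub_apply]
        refine ContinuousLinearMap.le_of_opNorm_le _ ?_ x
        rw [← dist_eq_norm]
        refine (hδ'S ?_).le
        rw [Real.dist_eq, abs_of_pos (by linarith [hs.1])]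
        linarith [hs.2]
    have b2 : ‖(∫ t in t₁..(t₁ + δ), Complex.exp (-z * t))‖ ≤ 2 * C / ‖z‖ := by
      rw [integral_exp_mul_complex (neg_ne_zero.2 hzne), norm_div, norm_neg]
      gcongr
      refine (norm_sub_le _ _).trans ?_
      have := hexp (t₁ + δ) (by linarith) (by linarith)
      have := hexp t₁ (by linarith) (by linarith)
      linarith
    have b3 : 2 * C / ‖z‖ * ‖S t₁‖ ≤ δ / 4 := by
      rw [div_lt_iff₀ hδpos] at hzr
      rw [div_mul_eq_mul_div, div_le_iff₀ hz0]
      nlinarith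
    rw [add_sub_cancel_left, abs_of_pos hδpos] at b1
    have b1' : C * (1 / (4 * C) * ‖x‖) * δ = δ / 4 * ‖x‖ := by field_simp
    rw [b1'] at b1
    have b4 : ‖(∫ t in t₁..(t₁ + δ), Complex.exp (-z * t)) • S t₁ x‖ ≤ δ / 4 * ‖x‖ := by
      rw [norm_smul]
      calc _ ≤ (2 * C / ‖z‖) * (‖S t₁‖ * ‖x‖) := by
            gcongr
            exact (S t₁).le_opNorm x
        _ = 2 * C / ‖z‖ * ‖S t₁‖ * ‖x‖ := by ring
        _ ≤ _ := by gcongr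
    rw [hK, hsplit, norm_smul, norm_inv, Real.norm_of_nonneg hδpos.le, inv_mul_le_iff₀ hδpos]
    refine (norm_add_le _ _).trans ?_
    linarith
  obtain ⟨R, hR1, hR2⟩ := exists_resolvent U hU hU0 hUadd t₁ δ (by linarith) hδpos K hK hK1
  have hexpd : ∀ w : ℂ, Tendsto (fun h : ℝ => h⁻¹ • (Complex.exp (w * h) - 1))
      (𝓝[>] 0) (𝓝 w) := by
    intro w
    have hd : HasDerivAt (fun t : ℝ => Complex.exp (w * t)) w 0 := by
      have h1 : HasDerivAt (fun t : ℝ => w * (t : ℂ)) (w * 1) 0 :=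
        (Complex.ofRealCLM.hasDerivAt (x := (0 : ℝ))).const_mul w
      simpa using h1.cexp
    simpa using hd.tendsto_slope_zero_right
  have hexp1 : ∀ w : ℂ, Tendsto (fun h : ℝ => Complex.exp (w * h)) (𝓝[>] 0) (𝓝 1) := by
    intro w
    have : Continuous fun h : ℝ => Complex.exp (w * h) := by fun_prop
    have h2 := this.tendsto 0
    simp only [Complex.ofReal_zero, mul_zero, Complex.exp_zero] at h2
    exact h2.mono_left nhdsWithin_le_nhds
  refine ⟨R, fun x => ?_, fun y => ?_⟩
  · have hlim : Tendsto (fun t : ℝ => t⁻¹ • (S t (R x) - R x)) (𝓝[>] 0) (𝓝 (z • R x - x)) := by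
      have h1 := ((hexp1 z).smul (hR1 x)).add ((hexpd z).smul_const (R x))
      rw [one_smul, neg_add_eq_sub] at h1
      refine h1.congr' ?_
      filter_upwards [self_mem_nhdsWithin] with h hh
      rw [hUpos h (le_of_lt hh), smul_comm, smul_assoc, ← smul_add, ContinuousLinearMap.smul_apply,
        smul_sub, smul_smul, ← Complex.exp_add, neg_mul, add_neg_cancel, Complex.exp_zero,
        one_smul, sub_smul, one_smul, sub_add_sub_cancel]
    have hx : R x ∈ D := (hdom _).2 ⟨_, hlim⟩
    exact ⟨hx, tendsto_nhds_unique (hA ⟨R x, hx⟩) hlim⟩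
  · have h0 : R (A y - z • (y : X)) = -(y : X) := by
      apply hR2
      have h1 := ((hexp1 (-z)).smul (hA y)).add ((hexpd (-z)).smul_const (y : X))
      rw [one_smul, neg_smul, ← sub_eq_add_neg] at h1
      refine h1.congr' ?_
      filter_upwards [self_mem_nhdsWithin] with h hh
      rw [hUpos h (le_of_lt hh), smul_comm, smul_assoc, ← smul_add, ContinuousLinearMap.smul_apply,
        smul_sub, sub_smul, one_smul, sub_add_sub_cancel]
    rw [← neg_sub, map_neg, h0, neg_neg]
end
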